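/- (Uniqueness of the solution of the nonlinear discrete system.) Let b ∈ ℝ^{N+1}. Suppose U, V ∈ ℝ^{N+1} both satisfy the nonlinear discrete equations: U_0 = V_0 = b_0, U_N = V_N = b_N, and for every interior index i, U_i − Δt · max_{σ∈{σ̲,σ̄}} [ α_i(σ)U_{i−1} + β_i(σ)U_{i+1} − (α_i(σ)+β_i(σ)+r)U_i ] = b_i and likewise for V. Then U = V. -/

import Mathlib

/-!
Discrete maximum principle. The off-diagonal entries of `A(σ)` are nonnegative and its interior rows
sum to `-r`, so at an interior maximum `k` of `U - V` one has
`(A(σ)U)_k ≤ (A(σ)V)_k - r (U_k - V_k)` for every `σ`, and the supremum over `σ` inherits this.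
Subtracting the two nodal equations leaves `(1 + Δt r) (U_k - V_k) ≤ 0`. On the boundary `U - V`
vanishes, so it is nowhere positive, and exchanging `U` and `V` gives equality.
-/

/-- `α_i(σ) = σ²x_i²/((x_i − x_{i−1})(x_{i+1} − x_{i−1}))`. -/
noncomputable def alphaC (x : ℕ → ℝ) (s : ℝ) (i : ℕ) : ℝ :=
  s ^ 2 * (x i) ^ 2 / ((x i - x (i - 1)) * (x (i + 1) - x (i - 1)))

/-- `β_i(σ) = σ²x_i²/((x_{i+1} − x_i)(x_{i+1} − x_{i−1}))`. -/
noncomputable def betaC (x : ℕ → ℝ) (s : ℝ) (i : ℕ) : ℝ :=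
  s ^ 2 * (x i) ^ 2 / ((x (i + 1) - x i) * (x (i + 1) - x (i - 1)))

/-- The `i`-th component of `A(τ)u`:
`(A(τ)u)_i = α_i(τ)u_{i−1} + β_i(τ)u_{i+1} − (α_i(τ)+β_i(τ)+r)u_i`. -/
noncomputable def Fnode (x : ℕ → ℝ) (s r : ℝ) (i : ℕ) (u : ℕ → ℝ) : ℝ :=
  alphaC x s i * u (i - 1) + betaC x s i * u (i + 1)
    - (alphaC x s i + betaC x s i + r) * u i

lemma forall_le_of_le_at_max_sub {ι G : Type*} [AddCommGroup G] [LinearOrder G]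
    [IsOrderedAddMonoid G] {s : Finset ι} {u v : ι → G}
    (h : ∀ k ∈ s, (∀ i ∈ s, u i - v i ≤ u k - v k) → u k ≤ v k) :
    ∀ i ∈ s, u i ≤ v i := by
  intro i hi
  obtain ⟨k, hk, hmax⟩ := s.exists_max_image (fun j => u j - v j) ⟨i, hi⟩
  exact sub_nonpos.mp ((hmax i hi).trans (sub_nonpos.mpr (h k hk hmax)))

section Node

variable {x : ℕ → ℝ} {i : ℕ}

lemma alphaC_nonneg (hleft : x (i - 1) ≤ x i) (hright : x i ≤ x (i + 1)) (s : ℝ) :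
    0 ≤ alphaC x s i :=
  div_nonneg (by positivity)
    (mul_nonneg (sub_nonneg.mpr hleft) (sub_nonneg.mpr (hleft.trans hright)))

lemma betaC_nonneg (hleft : x (i - 1) ≤ x i) (hright : x i ≤ x (i + 1)) (s : ℝ) :
    0 ≤ betaC x s i :=
  div_nonneg (by positivity)
    (mul_nonneg (sub_nonneg.mpr hright) (sub_nonneg.mpr (hleft.trans hright)))

lemma Fnode_sub (x : ℕ → ℝ) (s r : ℝ) (i : ℕ) (u v : ℕ → ℝ) :
    Fnode x s r i (u - v) = Fnode x s r i u - Fnode x s r i v := by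
  simp only [Fnode, Pi.sub_apply]
  ring

lemma continuous_Fnode (x : ℕ → ℝ) (r : ℝ) (i : ℕ) (u : ℕ → ℝ) :
    Continuous fun s => Fnode x s r i u := by
  unfold Fnode alphaC betaC
  fun_prop

lemma Fnode_le_neg_mul_of_neighbors_le (hleft : x (i - 1) ≤ x i) (hright : x i ≤ x (i + 1))
    (s r : ℝ) {w : ℕ → ℝ} (hwl : w (i - 1) ≤ w i) (hwr : w (i + 1) ≤ w i) :
    Fnode x s r i w ≤ -(r * w i) :=
  calc Fnode x s r i w
      = alphaC x s i * (w (i - 1) - w i) + betaC x s i * (w (i + 1) - w i) - r * w i := by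
        unfold Fnode
        ring
    _ ≤ 0 + 0 - r * w i := by
        gcongr
        · exact mul_nonpos_of_nonneg_of_nonpos (alphaC_nonneg hleft hright s) (sub_nonpos.mpr hwl)
        · exact mul_nonpos_of_nonneg_of_nonpos (betaC_nonneg hleft hright s) (sub_nonpos.mpr hwr)
    _ = -(r * w i) := by ring

/-- The nodal Black–Scholes–Barenblatt operator `u ↦ sup_{σ ∈ S} (A(σ)u)_i` for an arbitrary set `S`
of volatilities; the real `sSup` is the intended supremum when `S` is nonempty and compact. -/
noncomputable def barenblattNode (x : ℕ → ℝ) (S : Set ℝ) (r : ℝ) (i : ℕ) (u : ℕ → ℝ) : ℝ :=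
  sSup ((fun s => Fnode x s r i u) '' S)

lemma barenblattNode_pair (x : ℕ → ℝ) (s t r : ℝ) (i : ℕ) (u : ℕ → ℝ) :
    barenblattNode x {s, t} r i u = max (Fnode x s r i u) (Fnode x t r i u) := by
  rw [barenblattNode, Set.image_pair, csSup_pair]

lemma barenblattNode_le_of_neighbors_sub_le (hleft : x (i - 1) ≤ x i) (hright : x i ≤ x (i + 1))
    {S : Set ℝ} (hS : IsCompact S) (hS₀ : S.Nonempty) (r : ℝ) {u v : ℕ → ℝ}
    (hwl : u (i - 1) - v (i - 1) ≤ u i - v i) (hwr : u (i + 1) - v (i + 1) ≤ u i - v i) :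
    barenblattNode x S r i u ≤ barenblattNode x S r i v - r * (u i - v i) := by
  refine csSup_le (hS₀.image _) (Set.forall_mem_image.mpr fun s hs => ?_)
  have hdiff : Fnode x s r i u - Fnode x s r i v ≤ -(r * (u i - v i)) := by
    rw [← Fnode_sub]
    exact Fnode_le_neg_mul_of_neighbors_le hleft hright s r hwl hwr
  have hsup : Fnode x s r i v ≤ barenblattNode x S r i v :=
    le_csSup (hS.bddAbove_image (continuous_Fnode x r i v).continuousOn)
      (Set.mem_image_of_mem _ hs)
  linarith

end Node

section ImplicitStep

variable {N : ℕ} {x : ℕ → ℝ} {S : Set ℝ} {r Δt : ℝ} {U V : ℕ → ℝ}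

theorem barenblatt_comparison (hx : ∀ i < N, x i < x (i + 1))
    (hS : IsCompact S) (hS₀ : S.Nonempty) (hΔt : 0 ≤ Δt) (hr : 0 < 1 + Δt * r)
    (h0 : U 0 ≤ V 0) (hN : U N ≤ V N)
    (h : ∀ i, 0 < i → i < N →
      U i - Δt * barenblattNode x S r i U ≤ V i - Δt * barenblattNode x S r i V) :
    ∀ i ≤ N, U i ≤ V i := by
  suffices hmem : ∀ i ∈ Finset.Iic N, U i ≤ V i from fun i hi => hmem i (Finset.mem_Iic.mpr hi)
  refine forall_le_of_le_at_max_sub fun k hk hmax => ?_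
  simp only [Finset.mem_Iic] at hk hmax
  rcases k.eq_zero_or_pos with rfl | hk0
  · exact h0
  rcases hk.eq_or_lt with rfl | hkN
  · exact hN
  have hleft : x (k - 1) < x k := by
    simpa only [Nat.sub_add_cancel hk0] using hx (k - 1) (by lia)
  have hnode : Δt * barenblattNode x S r k U
      ≤ Δt * (barenblattNode x S r k V - r * (U k - V k)) :=
    mul_le_mul_of_nonneg_left
      (barenblattNode_le_of_neighbors_sub_le hleft.le (hx k hkN).le hS hS₀ r
        (hmax _ (by lia)) (hmax _ hkN)) hΔt
  have hprod : (1 + Δt * r) * (U k - V k) ≤ 0 := by linarith [h k hk0 hkN]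
  exact sub_nonpos.mp (nonpos_of_mul_nonpos_right hprod hr)

theorem uniqueness_nonlinear_discrete_system_general {b : ℕ → ℝ}
    (hx : ∀ i < N, x i < x (i + 1)) (hS : IsCompact S) (hS₀ : S.Nonempty)
    (hΔt : 0 ≤ Δt) (hr : 0 < 1 + Δt * r)
    (hU0 : U 0 = b 0) (hUN : U N = b N) (hV0 : V 0 = b 0) (hVN : V N = b N)
    (hU : ∀ i, 0 < i → i < N → U i - Δt * barenblattNode x S r i U = b i)
    (hV : ∀ i, 0 < i → i < N → V i - Δt * barenblattNode x S r i V = b i) :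
    ∀ i ≤ N, U i = V i := fun i hi =>
  le_antisymm
    (barenblatt_comparison hx hS hS₀ hΔt hr (hU0.trans hV0.symm).le (hUN.trans hVN.symm).le
      (fun j hj0 hjN => ((hU j hj0 hjN).trans (hV j hj0 hjN).symm).le) i hi)
    (barenblatt_comparison hx hS hS₀ hΔt hr (hV0.trans hU0.symm).le (hVN.trans hUN.symm).le
      (fun j hj0 hjN => ((hV j hj0 hjN).trans (hU j hj0 hjN).symm).le) i hi)

end ImplicitStep

/-- Uniqueness of the solution of the nonlinear discrete system: two solutions of
`U_i − Δt·max_{σ∈{σ̲,σ̄}} (A(σ)U)_i = b_i` (with identity boundary rows) coincide. -/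
theorem uniqueness_nonlinear_discrete_system
    (N : ℕ) (hN : 2 ≤ N) (x : ℕ → ℝ) (hx0 : x 0 = 0)
    (hxmono : ∀ i < N, x i < x (i + 1))
    (σlo σhi r Δt : ℝ) (hσlo : 0 ≤ σlo) (hσ : σlo < σhi) (hr : 0 ≤ r) (hΔt : 0 < Δt)
    (b U V : ℕ → ℝ)
    (hU0 : U 0 = b 0) (hUN : U N = b N) (hV0 : V 0 = b 0) (hVN : V N = b N)
    (hU : ∀ i, 1 ≤ i → i ≤ N - 1 →
      U i - Δt * max (Fnode x σlo r i U) (Fnode x σhi r i U) = b i)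
    (hV : ∀ i, 1 ≤ i → i ≤ N - 1 →
      V i - Δt * max (Fnode x σlo r i V) (Fnode x σhi r i V) = b i) :
    ∀ i ≤ N, U i = V i := by
  simp only [← barenblattNode_pair] at hU hV
  exact uniqueness_nonlinear_discrete_system_general hxmono (Set.toFinite _).isCompact
    (Set.insert_nonempty _ _) hΔt.le (by positivity) hU0 hUN hV0 hVN
    (fun i hi0 hiN => hU i hi0 (by lia)) (fun i hi0 hiN => hV i hi0 (by lia))
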